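/- Let u ≥ 1, ε > 0, A ≥ 0, and let ρ : [0,1] → ℂ be continuous with |ρ(t) − ρ(s)| ≤ A |t − s|^{1/u} for all s, t ∈ [0,1]. Then for every j ≥ 0, ( Σ_{μ=0}^{2^j − 1} |2^j ⟨h_{j,μ}, ρ⟩|^{u+ε} )^{1/(u+ε)} ≤ A · 2^{−1/u} · 2^{−j/u} · 2^{j/(u+ε)}. -/

import Mathlib

/-- The Haar function `h_{j,μ}` on `[0,1]`: equal to `1` on
`[2^{-j}μ, 2^{-j}(μ+1/2))`, to `-1` on `[2^{-j}(μ+1/2), 2^{-j}(μ+1))`, and `0`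
elsewhere. -/
noncomputable def haarFn (j μ : ℕ) : ℝ → ℝ := fun t =>
  Set.indicator (Set.Ico ((μ : ℝ) / 2 ^ j) (((μ : ℝ) + 1 / 2) / 2 ^ j))
      (fun _ => (1 : ℝ)) t
  - Set.indicator (Set.Ico (((μ : ℝ) + 1 / 2) / 2 ^ j) (((μ : ℝ) + 1) / 2 ^ j))
      (fun _ => (1 : ℝ)) t

/-- The Haar coefficient `⟨h_{j,μ}, ρ⟩ = ∫₀¹ h_{j,μ}(t) ρ(t) dt`. -/
noncomputable def haarCoeff (j μ : ℕ) (ρ : ℝ → ℂ) : ℂ :=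
  ∫ t in (0:ℝ)..1, haarFn j μ t • ρ t

/-!
The two halves of the support of `h_{j,μ}` are translates of each other by `2^{-(j+1)}`, so
`⟨h_{j,μ}, ρ⟩` is the integral of `ρ(t) - ρ(t + 2^{-(j+1)})` over the left half. A Hölder bound
of exponent `α` therefore gives `|2^j ⟨h_{j,μ}, ρ⟩| ≤ (A/2) · 2^{-(j+1)α}` uniformly in `μ`, and
the `ℓ^p` norm of `2^j` such numbers costs a further factor `2^{j/p}`.
-/

lemma rpow_sum_rpow_le_mul_card_rpow {ι : Type*} {s : Finset ι} {f : ι → ℝ} {K p : ℝ}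
    (hp : 0 < p) (hf : ∀ i ∈ s, 0 ≤ f i) (hfK : ∀ i ∈ s, f i ≤ K) :
    (∑ i ∈ s, f i ^ p) ^ (1 / p) ≤ K * (s.card : ℝ) ^ (1 / p) := by
  obtain rfl | ⟨i, hi⟩ := s.eq_empty_or_nonempty
  · simp [hp.ne']
  have hK : 0 ≤ K := (hf i hi).trans (hfK i hi)
  calc (∑ i ∈ s, f i ^ p) ^ (1 / p)
      ≤ (∑ _i ∈ s, K ^ p) ^ (1 / p) := by
        gcongr with i hi
        · exact Finset.sum_nonneg fun i hi ↦ Real.rpow_nonneg (hf i hi) p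
        · exact hf i hi
        · exact hfK i hi
    _ = K * (s.card : ℝ) ^ (1 / p) := by
        rw [Finset.sum_const, nsmul_eq_mul, mul_comm, Real.mul_rpow (by positivity) (by positivity),
          one_div, Real.rpow_rpow_inv hK hp.ne']

lemma dyadic_left_add_half (j : ℕ) (x : ℝ) : x / 2 ^ j + 1 / 2 ^ (j + 1) = (x + 1 / 2) / 2 ^ j := by
  field_simp
  ring

lemma dyadic_mid_add_half (j : ℕ) (x : ℝ) :
    (x + 1 / 2) / 2 ^ j + 1 / 2 ^ (j + 1) = (x + 1) / 2 ^ j := by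
  rw [dyadic_left_add_half, add_assoc, add_halves]

lemma dyadic_right_le_one {j μ : ℕ} (hμ : μ < 2 ^ j) : ((μ + 1) / 2 ^ j : ℝ) ≤ 1 := by
  rw [div_le_one (by positivity)]
  exact_mod_cast hμ

lemma one_div_two_pow_succ_rpow (j : ℕ) (α : ℝ) :
    ((1 : ℝ) / 2 ^ (j + 1)) ^ α = 2 ^ (-α) * 2 ^ (-(j : ℝ) * α) := by
  rw [one_div, ← Real.rpow_natCast, ← Real.rpow_neg zero_le_two, ← Real.rpow_mul zero_le_two,
    ← Real.rpow_add two_pos]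
  push_cast
  ring_nf

section HaarCoefficients

open MeasureTheory Set

variable {E : Type*} [NormedAddCommGroup E] [NormedSpace ℝ E]

lemma intervalIntegral_indicator_Ico {a b c d : ℝ} (hca : c ≤ a) (hab : a ≤ b) (hbd : b ≤ d)
    (f : ℝ → E) : ∫ t in c..d, (Ico a b).indicator f t = ∫ t in a..b, f t := by
  have hsub : Ico a b ⊆ Icc c d := Ico_subset_Icc_self.trans (Icc_subset_Icc hca hbd)
  rw [intervalIntegral.integral_of_le (hca.trans (hab.trans hbd)),
    ← integral_Icc_eq_integral_Ioc, setIntegral_indicator measurableSet_Ico,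
    inter_eq_right.2 hsub, integral_Ico_eq_integral_Ioc, intervalIntegral.integral_of_le hab]

lemma integral_sub_integral_eq_integral_sub_comp_add_right {f : ℝ → E} {a b d : ℝ}
    (hf : IntervalIntegrable f volume a b)
    (hfd : IntervalIntegrable f volume (a + d) (b + d)) :
    (∫ t in a..b, f t) - ∫ t in (a + d)..(b + d), f t = ∫ t in a..b, (f t - f (t + d)) := by
  rw [← intervalIntegral.integral_comp_add_right,
    intervalIntegral.integral_sub hf (by simpa using hfd.comp_add_right d)]

lemma haarFn_smul_eq_indicator_sub (j μ : ℕ) (ρ : ℝ → E) (t : ℝ) :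
    haarFn j μ t • ρ t =
      (Ico ((μ : ℝ) / 2 ^ j) ((μ + 1 / 2) / 2 ^ j)).indicator ρ t -
        (Ico ((μ + 1 / 2 : ℝ) / 2 ^ j) ((μ + 1) / 2 ^ j)).indicator ρ t := by
  simp only [haarFn, sub_smul, ← indicator_smul_apply_left, one_smul]

lemma integral_haarFn_smul {j μ : ℕ} (hμ : μ < 2 ^ j) {ρ : ℝ → E}
    (hρ : IntervalIntegrable ρ volume 0 1) :
    ∫ t in (0 : ℝ)..1, haarFn j μ t • ρ t =
      ∫ t in (μ / 2 ^ j : ℝ)..((μ + 1 / 2) / 2 ^ j), (ρ t - ρ (t + 1 / 2 ^ (j + 1))) := by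
  have left_nonneg : (0 : ℝ) ≤ μ / 2 ^ j := by positivity
  have left_le_mid : (μ / 2 ^ j : ℝ) ≤ (μ + 1 / 2) / 2 ^ j := by gcongr; norm_num
  have mid_le_right : ((μ + 1 / 2) / 2 ^ j : ℝ) ≤ (μ + 1) / 2 ^ j := by gcongr; norm_num
  have right_le_one := dyadic_right_le_one hμ
  have mid_nonneg := left_nonneg.trans left_le_mid
  have mid_le_one := mid_le_right.trans right_le_one
  have integrable_indicator (a b : ℝ) :
      IntervalIntegrable ((Ico a b).indicator ρ) volume 0 1 :=
    ⟨hρ.1.indicator measurableSet_Ico, hρ.2.indicator measurableSet_Ico⟩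
  have integrable_subinterval {a b : ℝ} (ha : 0 ≤ a) (hab : a ≤ b) (hb : b ≤ 1) :
      IntervalIntegrable ρ volume a b := by
    refine hρ.mono_set ?_
    rw [uIcc_of_le hab, uIcc_of_le zero_le_one]
    exact Icc_subset_Icc ha hb
  have integrable_right_half : IntervalIntegrable ρ volume
      (μ / 2 ^ j + 1 / 2 ^ (j + 1)) ((μ + 1 / 2) / 2 ^ j + 1 / 2 ^ (j + 1)) := by
    rw [dyadic_left_add_half, dyadic_mid_add_half]
    exact integrable_subinterval mid_nonneg mid_le_right right_le_one
  simp only [haarFn_smul_eq_indicator_sub]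
  rw [intervalIntegral.integral_sub (integrable_indicator _ _) (integrable_indicator _ _),
    intervalIntegral_indicator_Ico left_nonneg left_le_mid mid_le_one,
    intervalIntegral_indicator_Ico mid_nonneg mid_le_right right_le_one,
    ← integral_sub_integral_eq_integral_sub_comp_add_right
      (integrable_subinterval left_nonneg left_le_mid mid_le_one) integrable_right_half,
    dyadic_left_add_half, dyadic_mid_add_half]

lemma norm_integral_haarFn_smul_le {j μ : ℕ} (hμ : μ < 2 ^ j) {ρ : ℝ → E}
    (hρ : IntervalIntegrable ρ volume 0 1) {C : ℝ}
    (hC : ∀ t, 0 ≤ t → t + 1 / 2 ^ (j + 1) ≤ 1 → ‖ρ t - ρ (t + 1 / 2 ^ (j + 1))‖ ≤ C) :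
    ‖∫ t in (0 : ℝ)..1, haarFn j μ t • ρ t‖ ≤ C / 2 ^ (j + 1) := by
  have left_nonneg : (0 : ℝ) ≤ μ / 2 ^ j := by positivity
  have half_pos : (0 : ℝ) < 1 / 2 ^ (j + 1) := by positivity
  have half_length : ((μ + 1 / 2) / 2 ^ j : ℝ) - μ / 2 ^ j = 1 / 2 ^ (j + 1) := by
    rw [← dyadic_left_add_half, add_sub_cancel_left]
  have right_le_one := dyadic_right_le_one hμ
  rw [← dyadic_mid_add_half] at right_le_one
  have norm_sub_le : ∀ t ∈ uIoc (μ / 2 ^ j : ℝ) ((μ + 1 / 2) / 2 ^ j),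
      ‖ρ t - ρ (t + 1 / 2 ^ (j + 1))‖ ≤ C := by
    intro t ht
    rw [uIoc_of_le (by linarith)] at ht
    exact hC t (left_nonneg.trans ht.1.le) (by linarith [ht.2])
  calc ‖∫ t in (0 : ℝ)..1, haarFn j μ t • ρ t‖
      ≤ C * |((μ + 1 / 2) / 2 ^ j : ℝ) - μ / 2 ^ j| := by
        rw [integral_haarFn_smul hμ hρ]
        exact intervalIntegral.norm_integral_le_of_norm_le_const norm_sub_le
    _ = C / 2 ^ (j + 1) := by rw [half_length, abs_of_pos half_pos, mul_one_div]

lemma norm_two_pow_smul_integral_haarFn_smul_le_of_holder {j μ : ℕ} (hμ : μ < 2 ^ j) {ρ : ℝ → E}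
    (hρ : IntervalIntegrable ρ volume 0 1) {A α : ℝ}
    (hH : ∀ s ∈ Icc (0 : ℝ) 1, ∀ t ∈ Icc (0 : ℝ) 1, ‖ρ t - ρ s‖ ≤ A * |t - s| ^ α) :
    ‖(2 ^ j : ℝ) • ∫ t in (0 : ℝ)..1, haarFn j μ t • ρ t‖ ≤
      A / 2 * 2 ^ (-α) * 2 ^ (-(j : ℝ) * α) := by
  have half_pos : (0 : ℝ) < 1 / 2 ^ (j + 1) := by positivity
  have norm_sub_le (t : ℝ) (ht₀ : 0 ≤ t) (ht₁ : t + 1 / 2 ^ (j + 1) ≤ 1) :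
      ‖ρ t - ρ (t + 1 / 2 ^ (j + 1))‖ ≤ A * (1 / 2 ^ (j + 1)) ^ α := by
    have := hH (t + 1 / 2 ^ (j + 1)) ⟨by linarith, ht₁⟩ t ⟨ht₀, by linarith⟩
    rwa [sub_add_cancel_left, abs_neg, abs_of_pos half_pos] at this
  calc ‖(2 ^ j : ℝ) • ∫ t in (0 : ℝ)..1, haarFn j μ t • ρ t‖
      = 2 ^ j * ‖∫ t in (0 : ℝ)..1, haarFn j μ t • ρ t‖ := by
        rw [norm_smul, norm_pow, Real.norm_two]
    _ ≤ 2 ^ j * (A * (1 / 2 ^ (j + 1)) ^ α / 2 ^ (j + 1)) := by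
        gcongr
        exact norm_integral_haarFn_smul_le hμ hρ norm_sub_le
    _ = A / 2 * (1 / 2 ^ (j + 1)) ^ α := by field_simp; ring
    _ = A / 2 * 2 ^ (-α) * 2 ^ (-(j : ℝ) * α) := by rw [one_div_two_pow_succ_rpow, mul_assoc]

end HaarCoefficients

lemma norm_two_pow_mul_haarCoeff (j μ : ℕ) (ρ : ℝ → ℂ) :
    ‖(2 ^ j : ℂ) * haarCoeff j μ ρ‖ =
      ‖(2 ^ j : ℝ) • ∫ t in (0 : ℝ)..1, haarFn j μ t • ρ t‖ := by
  simp only [haarCoeff, norm_mul, norm_smul, norm_pow, RCLike.norm_ofNat]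

theorem haar_stmt10_general {E : Type*} [NormedAddCommGroup E] [NormedSpace ℝ E] [CompleteSpace E]
    {α p A : ℝ} (hp : 0 < p) {ρ : ℝ → E}
    (hρ : IntervalIntegrable ρ MeasureTheory.volume 0 1)
    (hH : ∀ s ∈ Set.Icc (0 : ℝ) 1, ∀ t ∈ Set.Icc (0 : ℝ) 1, ‖ρ t - ρ s‖ ≤ A * |t - s| ^ α)
    (j : ℕ) :
    (∑ μ ∈ Finset.range (2 ^ j), ‖(2 ^ j : ℝ) • ∫ t in (0 : ℝ)..1, haarFn j μ t • ρ t‖ ^ p)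
        ^ (1 / p) ≤
      A / 2 * 2 ^ (-α) * 2 ^ (-(j : ℝ) * α) * 2 ^ ((j : ℝ) / p) := by
  have card_rpow : ((Finset.range (2 ^ j)).card : ℝ) ^ (1 / p) = 2 ^ ((j : ℝ) / p) := by
    rw [Finset.card_range, Nat.cast_pow, Nat.cast_ofNat, ← Real.rpow_natCast,
      ← Real.rpow_mul zero_le_two, mul_one_div]
  rw [← card_rpow]
  exact rpow_sum_rpow_le_mul_card_rpow hp (fun _ _ ↦ norm_nonneg _) fun μ hμ ↦
    norm_two_pow_smul_integral_haarFn_smul_le_of_holder (Finset.mem_range.1 hμ) hρ hH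

/-- If `ρ : [0,1] → ℂ` is continuous with `|ρ t - ρ s| ≤ A |t - s|^(1/u)` on
`[0,1]` (`u ≥ 1`, `A ≥ 0`, `ε > 0`), then for every `j ≥ 0`,
`(Σ_{μ=0}^{2^j-1} |2^j ⟨h_{j,μ}, ρ⟩|^{u+ε})^{1/(u+ε)} ≤ A · 2^{-1/u} · 2^{-j/u} · 2^{j/(u+ε)}`. -/
theorem haar_stmt10 (u ε A : ℝ) (hu : 1 ≤ u) (hε : 0 < ε) (hA : 0 ≤ A)
    (ρ : ℝ → ℂ) (hcont : ContinuousOn ρ (Set.Icc 0 1))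
    (hH : ∀ s ∈ Set.Icc (0:ℝ) 1, ∀ t ∈ Set.Icc (0:ℝ) 1,
      ‖ρ t - ρ s‖ ≤ A * |t - s| ^ (1 / u)) :
    ∀ j : ℕ,
      (∑ μ ∈ Finset.range (2 ^ j), ‖(2 ^ j : ℂ) * haarCoeff j μ ρ‖ ^ (u + ε))
          ^ (1 / (u + ε))
        ≤ A * (2:ℝ) ^ (-(1 / u)) * (2:ℝ) ^ (-(j : ℝ) / u)
            * (2:ℝ) ^ ((j : ℝ) / (u + ε)) := by
  intro j
  simp only [norm_two_pow_mul_haarCoeff, div_eq_mul_one_div (-(j : ℝ)) u]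
  exact (haar_stmt10_general (by linarith) (hcont.intervalIntegrable_of_Icc zero_le_one) hH j).trans
    (by gcongr; exact half_le_self hA)
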